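/- arXiv:2505.03263 — 3 statements merged into one kernel-verified Lean document; each statement's English description precedes it below -/
import Mathlib

section
/- Let g be an integer with 9 ≤ g ≤ 12. Then for all integers a, b, if (2g−2)·a² + 4·a·b − 2·b² = 0, then 12 divides (2g−2)·a + 2·b. -/
/-- For `9 ≤ g ≤ 12` and integers `a, b`, if `(2g−2)·a² + 4·a·b − 2·b² = 0`,
then `12` divides `(2g−2)·a + 2·b`. -/
theorem isotropic_degree_div_twelve (g : ℤ) (hg9 : 9 ≤ g) (hg12 : g ≤ 12)
    (a b : ℤ) (h : (2 * g - 2) * a ^ 2 + 4 * a * b - 2 * b ^ 2 = 0) :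
    12 ∣ (2 * g - 2) * a + 2 * b := by
  have h1 : (b - a) ^ 2 = a ^ 2 * g := by linarith
  have hd : a ∣ b - a := (Int.pow_dvd_pow_iff (two_ne_zero)).1 ⟨g, h1⟩
  obtain ⟨k, hk⟩ := hd
  by_cases ha : a = 0
  · subst ha
    have hb : b = 0 := by linarith
    simp [hb]
  have hk2 : k ^ 2 = g := by
    rw [hk, mul_pow] at h1
    exact mul_left_cancel₀ (pow_ne_zero 2 ha) h1
  have hu : k ≤ 3 := by nlinarith
  have hl : -3 ≤ k := by nlinarith
  have hb : b = a + a * k := by linarith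
  subst hb
  subst hk2
  interval_cases k <;> omega
end

section
/- Let g be an integer with 9 ≤ g ≤ 12. Then there are no integers a, b such that (2g−2)·a² + 4·a·b − 2·b² = 0 and 1 ≤ (2g−2)·a + 2·b ≤ g − 2. -/
/-- For `9 ≤ g ≤ 12`, there are no integers `a, b` with
`(2g−2)·a² + 4·a·b − 2·b² = 0` and `1 ≤ (2g−2)·a + 2·b ≤ g − 2`. -/
theorem no_low_degree_isotropic (g : ℤ) (hg9 : 9 ≤ g) (hg12 : g ≤ 12) :
    ¬ ∃ a b : ℤ, (2 * g - 2) * a ^ 2 + 4 * a * b - 2 * b ^ 2 = 0 ∧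
      1 ≤ (2 * g - 2) * a + 2 * b ∧ (2 * g - 2) * a + 2 * b ≤ g - 2 := by
  rintro ⟨a, b, h, h1, h2⟩
  obtain ⟨d, hd⟩ : ∃ d, d = (g - 1) * a + b := ⟨_, rfl⟩
  have hb : b = d - (g - 1) * a := by linarith
  subst hb
  have k1 : 1 ≤ 2 * d := by linarith
  have k2 : 2 * d ≤ g - 2 := by linarith
  have k : d ^ 2 = g * (2 * (d * a) - (g - 1) * a ^ 2) := by linarith
  clear h h1 h2 hd
  have d1 : 1 ≤ d := by omega
  have d2 : d ≤ 5 := by omega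
  generalize a ^ 2 = s at k
  interval_cases g <;> interval_cases d <;> omega
end

section
/- Let R be a commutative ring, let c₁, c₂ be integers, and let ξ, H, L, P be elements of R satisfying ξ² = c₁·ξ·H − c₂·L, H² = 2·L, L² = 0, and ξ·H·L = P (integer coefficients interpreted via the canonical map ℤ → R). Then for every integer a, (2ξ + (3 − c₁)·H)³·(ξ − a·H) = 2·(−2a(c₁² − 2c₂ + 27) + c₁³ − 2c₁c₂ + 9(c₁² + 3c₁ − 2c₂ + 3))·P. -/
/-- The identity `(−K_{P(E)})³·(ξ − aH) = 2(−2a(c₁² − 2c₂ + 27) + c₁³ − 2c₁c₂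
+ 9(c₁² + 3c₁ − 2c₂ + 3))·P` in the Chow ring of the projectivization of a
rank-2 bundle on the quadric threefold. -/
theorem anticanonical_cube_mul
    {R : Type*} [CommRing R] (c₁ c₂ : ℤ) (ξ H L P : R)
    (hξ : ξ ^ 2 = (c₁ : R) * ξ * H - (c₂ : R) * L)
    (hH : H ^ 2 = 2 * L)
    (hL : L ^ 2 = 0)
    (hP : ξ * H * L = P) :
    ∀ a : ℤ,
      (2 * ξ + ((3 : R) - (c₁ : R)) * H) ^ 3 * (ξ - (a : R) * H)
        = 2 * (-2 * (a : R) * ((c₁ : R) ^ 2 - 2 * (c₂ : R) + 27)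
            + (c₁ : R) ^ 3 - 2 * (c₁ : R) * (c₂ : R)
            + 9 * ((c₁ : R) ^ 2 + 3 * (c₁ : R) - 2 * (c₂ : R) + 3)) * P := by
  intro a
  have h4 : H ^ 4 = 0 := by linear_combination (H ^ 2 + 2 * L) * hH + 4 * hL
  have h3 : ξ * H ^ 3 = 2 * P := by linear_combination ξ * H * hH + 2 * hP
  have h2 : ξ ^ 2 * H ^ 2 = 2 * (c₁ : R) * P := by
    linear_combination H ^ 2 * hξ + (c₁ : R) * h3 - (c₂ : R) * L * hH - 2 * (c₂ : R) * hL
  have h1 : ξ ^ 3 * H = (2 * (c₁ : R) ^ 2 - (c₂ : R)) * P := by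
    linear_combination ξ * H * hξ + (c₁ : R) * h2 - (c₂ : R) * hP
  have h0 : ξ ^ 4 = (2 * (c₁ : R) ^ 3 - 2 * (c₁ : R) * (c₂ : R)) * P := by
    linear_combination (ξ ^ 2 + (c₁ : R) * ξ * H - (c₂ : R) * L) * hξ + (c₁ : R) ^ 2 * h2
      - 2 * (c₁ : R) * (c₂ : R) * hP + (c₂ : R) ^ 2 * hL
  linear_combination 8 * h0 + (12 * (3 - (c₁ : R)) - 8 * (a : R)) * h1
    + (6 * (3 - (c₁ : R)) ^ 2 - 12 * (a : R) * (3 - (c₁ : R))) * h2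
    + ((3 - (c₁ : R)) ^ 3 - 6 * (a : R) * (3 - (c₁ : R)) ^ 2) * h3
    - (a : R) * (3 - (c₁ : R)) ^ 3 * h4
end
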